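/- Suppose n ≥ 2. Let A : C^n → C^n be a linear operator and b ∈ C^n, and assume that A is not a scalar multiple of the identity or b ≠ 0. Then the set M = {z ∈ C^n : (A − λI)z + b = 0 for some λ ∈ C} intersects the unit sphere S_n in a set of surface measure zero: σ(M ∩ S_n) = 0. -/

import Mathlib

/-!
The measure `toSphere` of a measurable set `s` is, up to a factor, the Lebesgue measure of the
truncated cone `(0, 1) • s`, so it suffices to show that the cone over `M ∩ S_n` is Lebesgue null.

If `b = 0`, the cone consists of eigenvectors of `A`, hence lies in a finite union of eigenspaces,
each of which is a proper subspace because `A` is not scalar.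

If `b ≠ 0`, the points `w` of the cone satisfy `A w + ‖w‖ b ∈ ℂ w`. When both `w` and `u w`
(with `|u| = 1`, `u ≠ 1`) satisfy this, subtracting the two conditions gives `b ∈ ℂ w`, that is,
`w ∈ ℂ b`. Off the null set `ℂ b` (a proper subspace, as `n ≥ 2`), the images of the cone under the
rotations `w ↦ u w` are therefore pairwise disjoint; they have equal measure and lie in the unit
ball, so this measure is zero (`volume_eq_zero_of_rotations_disjoint`). This replaces the
decomposition of `M` into a rational curve and affine subspaces.
-/

open MeasureTheory Metric Set Filter Topology
open scoped ENNReal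

noncomputable section

namespace SphereHardy

instance (n : ℕ) : MeasurableSpace (EuclideanSpace ℂ (Fin n)) := borel _
instance (n : ℕ) : BorelSpace (EuclideanSpace ℂ (Fin n)) := ⟨rfl⟩

/-- `ℂ^n` with its Euclidean structure. -/
abbrev En (n : ℕ) := EuclideanSpace ℂ (Fin n)

/-- The unit sphere `S_n` in `ℂ^n`. -/
abbrev Sph (n : ℕ) := Metric.sphere (0 : En n) 1

/-- The normalized surface area measure `σ` on the unit sphere `S_n`. -/
def sphMeasure (n : ℕ) : Measure (Sph n) :=
  (((volume : Measure (En n)).toSphere) Set.univ)⁻¹ • (volume : Measure (En n)).toSphere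

/-- Multiplication by a unit complex number, as a real-linear isometry of `ℂ^n`. -/
def rot (n : ℕ) (u : Circle) : En n ≃ₗᵢ[ℝ] En n where
  toLinearEquiv := (LinearEquiv.smulOfNeZero ℂ (En n) (u : ℂ) u.coe_ne_zero).restrictScalars ℝ
  norm_map' w := by
    change ‖(u : ℂ) • w‖ = ‖w‖
    rw [norm_smul, Circle.norm_coe, one_mul]

lemma rot_apply (n : ℕ) (u : Circle) (w : En n) : rot n u w = (u : ℂ) • w := rfl

lemma volume_submodule_eq_zero {n : ℕ} (S : Submodule ℂ (En n)) (hS : S ≠ ⊤) :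
    volume (S : Set (En n)) = 0 := by
  have := Measure.addHaar_submodule (volume : Measure (En n)) (S.restrictScalars ℝ)
    (by simpa using hS)
  simpa using this

/-- A measurable subset of the unit ball meeting every orbit `{u w : |u| = 1}` at most once is
null: its rotations are infinitely many disjoint sets of equal measure inside the unit ball. -/
lemma volume_eq_zero_of_rotations_disjoint {n : ℕ} {T : Set (En n)} (hT : MeasurableSet T)
    (hball : ∀ w ∈ T, ‖w‖ < 1)
    (hrot : ∀ w ∈ T, ∀ u : Circle, u ≠ 1 → (u : ℂ) • w ∉ T) :
    volume T = 0 := by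
  by_contra hne
  have hmeas : ∀ u : Circle, volume (rot n u ⁻¹' T) = volume T := fun u =>
    (rot n u).measurePreserving.measure_preimage hT.nullMeasurableSet
  have hfin := Measure.finite_const_le_meas_of_disjoint_iUnion (volume : Measure (En n))
    (pos_iff_ne_zero.mpr hne) (As := fun u : Circle => rot n u ⁻¹' T)
    (fun u => (rot n u).measurePreserving.measurable hT) ?_ ?_
  · simp only [hmeas, le_refl, ofPred_true] at hfin
    have : Infinite (Ioc (-Real.pi) Real.pi) :=
      (Ioc_infinite (neg_lt_self Real.pi_pos)).to_subtype
    have : Infinite Circle := Circle.argEquiv.infinite_iff.mpr this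
    exact infinite_univ hfin
  · intro u v huv
    rw [Function.onFun, disjoint_left]
    intro w hu hv
    simp only [mem_preimage, rot_apply] at hu hv
    refine hrot _ hu (v / u) (by rwa [ne_eq, div_eq_one, eq_comm]) ?_
    rwa [smul_smul, Circle.coe_div, div_mul_cancel₀ _ u.coe_ne_zero]
  · refine ne_top_of_le_ne_top (measure_ball_lt_top (μ := volume) (x := (0 : En n)) (r := 1)).ne
      (measure_mono ?_)
    refine iUnion_subset fun u w hw => ?_
    have := hball _ hw
    rw [LinearIsometryEquiv.norm_map] at this
    simpa using this

lemma volume_eigenvectors_eq_zero {n : ℕ} (A : En n →ₗ[ℂ] En n)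
    (h : ¬ ∃ c : ℂ, A = c • LinearMap.id) :
    volume {w : En n | w ≠ 0 ∧ ∃ lam : ℂ, A w = lam • w} = 0 := by
  have hfin := Module.End.finite_hasEigenvalue (A : Module.End ℂ (En n))
  refine measure_mono_null (t := ⋃ μ ∈ {μ | Module.End.HasEigenvalue A μ},
    (Module.End.eigenspace A μ : Set (En n))) ?_ ?_
  · rintro w ⟨hw, lam, hlam⟩
    have hmem : w ∈ Module.End.eigenspace A lam := Module.End.mem_eigenspace_iff.mpr hlam
    exact mem_biUnion (Module.End.hasEigenvalue_of_hasEigenvector ⟨hmem, hw⟩) hmem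
  · rw [measure_biUnion_null_iff hfin.countable]
    intro μ _
    refine volume_submodule_eq_zero _ fun htop => h ⟨μ, LinearMap.ext fun w => ?_⟩
    exact Module.End.mem_eigenspace_iff.mp (htop ▸ Submodule.mem_top : w ∈ _)

/-- The condition `v ∈ ℂ w`, written without division or quantifiers so that its dependence on
`v` and `w` is visibly continuous. -/
lemma exists_eq_smul_iff {n : ℕ} {v w : En n} (hw : w ≠ 0) :
    (∃ lam : ℂ, v = lam • w) ↔ ((‖w‖ : ℂ) ^ 2) • v = inner ℂ w v • w := by
  have hn : ((‖w‖ : ℂ) ^ 2) ≠ 0 := by simpa using hw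
  constructor
  · rintro ⟨lam, rfl⟩
    rw [inner_smul_right, inner_self_eq_norm_sq_to_K, smul_smul, mul_comm]
    rfl
  · intro h
    refine ⟨((‖w‖ : ℂ) ^ 2)⁻¹ * inner ℂ w v, ?_⟩
    rw [mul_smul, ← h, inv_smul_smul₀ hn]

/-- For `b ≠ 0`, the truncated cone over `M ∩ S_n` is null. -/
lemma volume_cone_eq_zero {n : ℕ} (hn : 2 ≤ n) (A : En n →ₗ[ℂ] En n) {b : En n} (hb : b ≠ 0) :
    volume {w : En n | w ≠ 0 ∧ ‖w‖ < 1 ∧ ∃ lam : ℂ, A w + (‖w‖ : ℂ) • b = lam • w} = 0 := by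
  set S : Submodule ℂ (En n) := Submodule.span ℂ {b}
  have hS : S ≠ ⊤ := by
    intro htop
    have h1 := finrank_span_singleton (K := ℂ) hb
    rw [show Submodule.span ℂ {b} = ⊤ from htop, finrank_top, finrank_euclideanSpace_fin] at h1
    omega
  set T : Set (En n) := {w | w ∉ S ∧ ‖w‖ < 1 ∧
    ((‖w‖ : ℂ) ^ 2) • (A w + (‖w‖ : ℂ) • b) = inner ℂ w (A w + (‖w‖ : ℂ) • b) • w}
  have hA : Continuous A := A.continuous_of_finiteDimensional
  have hT : MeasurableSet T := by
    refine (S.closed_of_finiteDimensional.measurableSet.compl).inter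
      ((isOpen_lt continuous_norm continuous_const).measurableSet.inter
        (isClosed_eq ?_ ?_).measurableSet) <;> fun_prop
  have hT0 : volume T = 0 := by
    refine volume_eq_zero_of_rotations_disjoint hT (fun w hw => hw.2.1) ?_
    rintro w ⟨hwS, -, hw⟩ u hu ⟨-, -, huw⟩
    have hw0 : w ≠ 0 := fun h0 => hwS (h0 ▸ S.zero_mem)
    obtain ⟨l, hl⟩ := (exists_eq_smul_iff hw0).mpr hw
    obtain ⟨m, hm⟩ := (exists_eq_smul_iff (smul_ne_zero u.coe_ne_zero hw0)).mpr huw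
    rw [map_smul, norm_smul, Circle.norm_coe, one_mul] at hm
    -- Subtracting `u` times the condition at `w` from the condition at `u w` eliminates `A`.
    have hbw : (((1 : ℂ) - u) * ‖w‖) • b = ((m - l) * u) • w := by
      have e1 : A w = l • w - (‖w‖ : ℂ) • b := eq_sub_of_add_eq hl
      rw [e1] at hm
      have : (((1 : ℂ) - u) * ‖w‖) • b
          = ((u : ℂ) • (l • w - (‖w‖ : ℂ) • b) + (‖w‖ : ℂ) • b) - ((u : ℂ) * l) • w := by module
      rw [this, hm]
      module
    have hc : ((1 : ℂ) - u) * ‖w‖ ≠ 0 := by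
      refine mul_ne_zero (sub_ne_zero.mpr fun h1 => hu ?_) (by simpa using hw0)
      exact Circle.ext (by simpa using h1.symm)
    have hk : (m - l) * u ≠ 0 := fun h0 => by
      rw [h0, zero_smul] at hbw
      exact smul_ne_zero hc hb hbw
    apply hwS
    rw [← S.smul_mem_iff hk, ← hbw]
    exact S.smul_mem _ (Submodule.mem_span_singleton_self b)
  refine measure_mono_null ?_ (measure_union_null (volume_submodule_eq_zero S hS) hT0)
  rintro w ⟨hw0, hw1, hlam⟩
  by_cases hwS : w ∈ S
  · exact Or.inl hwS
  · exact Or.inr ⟨hwS, hw1, (exists_eq_smul_iff hw0).mp hlam⟩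

/-- Suppose `n ≥ 2`.  Let `A : ℂ^n → ℂ^n` be a linear operator and
`b ∈ ℂ^n`, and assume that `A` is not a scalar multiple of the identity or `b ≠ 0`.
Then the set `M = {z ∈ ℂ^n : (A − λI)z + b = 0 for some λ ∈ ℂ}` intersects the unit
sphere `S_n` in a set of surface measure zero: `σ(M ∩ S_n) = 0`. -/
theorem sphMeasure_affine_eigen_set_eq_zero (n : ℕ) (hn : 2 ≤ n)
    (A : En n →ₗ[ℂ] En n) (b : En n)
    (h : (¬ ∃ c : ℂ, A = c • LinearMap.id) ∨ b ≠ 0) :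
    sphMeasure n {z : Sph n | ∃ lam : ℂ, A (z : En n) - lam • (z : En n) + b = 0} = 0 := by
  have hA : Continuous A := A.continuous_of_finiteDimensional
  have hne : ∀ z : Sph n, (z : En n) ≠ 0 := fun z => ne_zero_of_mem_unit_sphere z
  have hiff : ∀ (z : En n) (lam : ℂ), A z - lam • z + b = 0 ↔ A z + b = lam • z := by
    intro z lam
    rw [← sub_eq_zero (b := lam • z), sub_add_eq_add_sub]
  simp only [hiff]
  have hmeas : MeasurableSet {z : Sph n | ∃ lam : ℂ, A (z : En n) + b = lam • (z : En n)} := by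
    simp only [exists_eq_smul_iff (hne _)]
    refine (isClosed_eq ?_ ?_).measurableSet <;> fun_prop
  have hnull : volume
      {w : En n | w ≠ 0 ∧ ‖w‖ < 1 ∧ ∃ lam : ℂ, A w + (‖w‖ : ℂ) • b = lam • w} = 0 := by
    by_cases hb : b = 0
    · subst hb
      refine measure_mono_null ?_
        (volume_eigenvectors_eq_zero A (h.resolve_right fun h0 => h0 rfl))
      rintro w ⟨hw0, -, lam, hlam⟩
      exact ⟨hw0, lam, by simpa using hlam⟩
    · exact volume_cone_eq_zero hn A hb
  rw [sphMeasure, Measure.smul_apply, Measure.toSphere_apply' _ hmeas,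
    measure_mono_null ?_ hnull, mul_zero, smul_zero]
  rintro _ ⟨r, ⟨hr0, hr1⟩, _, ⟨z, ⟨lam, hlam⟩, rfl⟩, rfl⟩
  have hz : ‖(z : En n)‖ = 1 := norm_eq_of_mem_sphere z
  have hnorm : ‖r • (z : En n)‖ = r := by
    rw [norm_smul, hz, mul_one, Real.norm_of_nonneg hr0.le]
  refine ⟨smul_ne_zero hr0.ne' (hne z), hnorm.trans_lt hr1, lam, ?_⟩
  change A (r • (z : En n)) + (‖r • (z : En n)‖ : ℂ) • b = lam • r • (z : En n)
  rw [hnorm, ← Complex.coe_smul r (z : En n), map_smul, ← smul_add, hlam, smul_comm]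

end SphereHardy
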